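/- Pairwise separation across distinct strongly connected components: for every directed graph G = (V, E_d) and nodes v, w ∈ V with v ≠ w and scc_G(v) ≠ scc_G(w), either ({v}, {w}, pa_G(scc_G(w))) ∈ I_E^G or ({w}, {v}, pa_G(scc_G(v))) ∈ I_E^G. -/

import Mathlib

namespace ESepPaper

/-- A directed mixed graph: directed edges and bidirected edges over a node type `V`.
A directed graph (DG) is a DMG with `Ebi = ∅`. -/
structure DMG (V : Type) where
  Ed : Set (V × V)
  Ebi : Set (Sym2 V)

variable {V : Type}

/-- `G.ancestor u v` : there is a directed path `u → … → v` (possibly trivial). -/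
def DMG.ancestor (G : DMG V) : V → V → Prop :=
  Relation.ReflTransGen (fun u v => (u, v) ∈ G.Ed)

/-- Ancestors of a set `C`. -/
def DMG.anc (G : DMG V) (C : Set V) : Set V := {u | ∃ v ∈ C, G.ancestor u v}

/-- Strongly connected component of `v`. -/
def DMG.scc (G : DMG V) (v : V) : Set V := {w | G.ancestor w v ∧ G.ancestor v w}

/-- Parents of a set of nodes. -/
def DMG.pa (G : DMG V) (S : Set V) : Set V := {w | ∃ v ∈ S, (w, v) ∈ G.Ed}

/-- Kind of a traversed edge on a walk: forward directed, backward directed, or bidirected. -/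
inductive LinkType | fwd | bwd | bi
deriving DecidableEq

/-- Validity of a link of kind `t` between consecutive walk nodes `u` and `v`. -/
def DMG.linkOK (G : DMG V) (u v : V) : LinkType → Prop
  | .fwd => (u, v) ∈ G.Ed
  | .bwd => (v, u) ∈ G.Ed
  | .bi => s(u, v) ∈ G.Ebi

/-- Arrowhead at the second (right) endpoint of the link. -/
def LinkType.headR : LinkType → Prop
  | .fwd => True
  | .bwd => False
  | .bi => True

/-- Arrowhead at the first (left) endpoint of the link. -/
def LinkType.headL : LinkType → Prop
  | .fwd => False
  | .bwd => True
  | .bi => True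

/-- Tail at the second (right) endpoint. -/
def LinkType.tailR (t : LinkType) : Prop := t = .bwd

/-- Tail at the first (left) endpoint. -/
def LinkType.tailL (t : LinkType) : Prop := t = .fwd

/-- Walks in a DMG. -/
inductive DMG.Walk (G : DMG V) : V → V → Type
  | nil (v : V) : DMG.Walk G v v
  | cons {u v w : V} (t : LinkType) (h : G.linkOK u v t) (p : DMG.Walk G v w) : DMG.Walk G u w

/-- An interior node on a walk, whose incoming link is `t1` and outgoing link is `t2`,
is a collider iff both links have an arrowhead at it. -/
def colliderAt (t1 t2 : LinkType) : Prop := t1.headR ∧ t2.headL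

/-- An interior non-collider `v` between neighbours `u` (incoming link `t1`) and `w`
(outgoing link `t2`) is unblockable: on every side where the link has a tail at `v`, the
corresponding neighbour lies in `scc_G(v)` (left-chain/right-chain/fork cases). -/
def unblockableAt (G : DMG V) (u v w : V) (t1 t2 : LinkType) : Prop :=
  (t1.tailR → u ∈ G.scc v) ∧ (t2.tailL → w ∈ G.scc v)

namespace DMG.Walk

variable {G : DMG V}

/-- First node of a walk. -/
def first {a b : V} (_ : G.Walk a b) : V := a

def length : {a b : V} → G.Walk a b → ℕ
  | _, _, .nil _ => 0
  | _, _, .cons _ _ p => p.length + 1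

def support : {a b : V} → G.Walk a b → List V
  | a, _, .nil _ => [a]
  | a, _, .cons _ _ p => a :: p.support

/-- Auxiliary: σ-openness of the remainder of a walk, where `u` is the previous node and
`t1` the link from `u` into the current first node. -/
def sigmaOpenAux (C : Set V) : (u : V) → LinkType → {b c : V} → G.Walk b c → Prop
  | _, _, _, _, .nil _ => True
  | u, t1, v, _, .cons t2 _ q =>
      ((colliderAt t1 t2 → v ∈ G.anc C) ∧
       (¬ colliderAt t1 t2 → ¬ unblockableAt G u v q.first t1 t2 → v ∉ C)) ∧
      sigmaOpenAux C v t2 q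

/-- The walk is σ-open given `C`: every collider on it is an ancestor of a node of `C`, and
no blockable non-collider on it lies in `C`. -/
def sigmaOpen (C : Set V) : {a b : V} → G.Walk a b → Prop
  | _, _, .nil _ => True
  | a, _, .cons t _ q => sigmaOpenAux C a t q

/-- All links are forward directed. -/
def IsDirected : {a b : V} → G.Walk a b → Prop
  | _, _, .nil _ => True
  | _, _, .cons t _ p => t = .fwd ∧ p.IsDirected

/-- Interior nodes of the walk (all nodes except the two endpoints). -/
def interior {a b : V} (p : G.Walk a b) : List V := p.support.tail.dropLast

/-- Arrowhead at the first endpoint. -/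
def headAtStart : {a b : V} → G.Walk a b → Prop
  | _, _, .nil _ => False
  | _, _, .cons t _ _ => t.headL

def headAtEndAux : LinkType → {a b : V} → G.Walk a b → Prop
  | t, _, _, .nil _ => t.headR
  | _, _, _, .cons t _ q => headAtEndAux t q

/-- Arrowhead at the last endpoint. -/
def headAtEnd : {a b : V} → G.Walk a b → Prop
  | _, _, .nil _ => False
  | _, _, .cons t _ q => headAtEndAux t q

def noCollidersAux : LinkType → {a b : V} → G.Walk a b → Prop
  | _, _, _, .nil _ => True
  | t1, _, _, .cons t2 _ q => ¬ colliderAt t1 t2 ∧ noCollidersAux t2 q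

/-- There is no collider on the walk. -/
def NoColliders : {a b : V} → G.Walk a b → Prop
  | _, _, .nil _ => True
  | _, _, .cons t _ q => noCollidersAux t q

def collidersInAux (S : Set V) : LinkType → {a b : V} → G.Walk a b → Prop
  | _, _, _, .nil _ => True
  | t1, v, _, .cons t2 _ q => (colliderAt t1 t2 → v ∈ S) ∧ collidersInAux S t2 q

/-- Every collider on the walk lies in `S`. -/
def CollidersIn (S : Set V) : {a b : V} → G.Walk a b → Prop
  | _, _, .nil _ => True
  | _, _, .cons t _ q => collidersInAux S t q

def noncollUnblAux : (u : V) → LinkType → {b c : V} → G.Walk b c → Prop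
  | _, _, _, _, .nil _ => True
  | u, t1, v, _, .cons t2 _ q =>
      (¬ colliderAt t1 t2 → unblockableAt G u v q.first t1 t2) ∧ noncollUnblAux v t2 q

/-- Every interior non-collider on the walk is unblockable. -/
def NoncollidersUnblockable : {a b : V} → G.Walk a b → Prop
  | _, _, .nil _ => True
  | a, _, .cons t _ q => noncollUnblAux a t q

/-- The set of edges occurring on a walk (directed edges as ordered pairs in `E_d`,
bidirected edges as unordered pairs). -/
def edges : {a b : V} → G.Walk a b → Set ((V × V) ⊕ Sym2 V)
  | _, _, .nil _ => ∅
  | a, _, .cons t _ p =>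
      insert (match t with
        | .fwd => Sum.inl (a, p.first)
        | .bwd => Sum.inl (p.first, a)
        | .bi => Sum.inr s(a, p.first)) p.edges

/-- Concatenation of walks. -/
def append : {a b c : V} → G.Walk a b → G.Walk b c → G.Walk a c
  | _, _, _, .nil _, q => q
  | _, _, _, .cons t h p, q => .cons t h (p.append q)

/-- A walk `v_0, …, v_{n+1}` is a path if no node besides the final endpoint occurs more
than once, i.e. `v_0, …, v_n` are pairwise distinct. -/
def IsPath {a b : V} (p : G.Walk a b) : Prop := p.support.dropLast.Nodup

end DMG.Walk

/-- `A` is σ-separated from `B` given `C` in `G`: every walk from a node of `A` to a node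
of `B` is σ-blocked given `C`. -/
def DMG.sigmaSep (G : DMG V) (A B C : Set V) : Prop :=
  ∀ a ∈ A, ∀ b ∈ B, ∀ p : G.Walk a b, ¬ p.sigmaOpen C

/-- The lifted dependency graph of `G`, on two copies of `V`
(`Sum.inl` is the past copy `V_0`, `Sum.inr` the future copy `V_1`). -/
def DMG.lift (G : DMG V) : DMG (V ⊕ V) where
  Ed := {e | ∃ u v, (u, v) ∈ G.Ed ∧
        (e = (Sum.inl u, Sum.inl v) ∨ e = (Sum.inl u, Sum.inr v) ∨
         e = (Sum.inr u, Sum.inr v))}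
  Ebi := {e | ∃ u v, s(u, v) ∈ G.Ebi ∧
        (e = s(Sum.inl u, Sum.inl v) ∨ e = s(Sum.inl u, Sum.inr v) ∨
         e = s(Sum.inr u, Sum.inl v) ∨ e = s(Sum.inr u, Sum.inr v))}

/-- `B` is E-separated from `A` given `C` in `G`:
`A_0` is σ-separated from `B_1` given `C_0 ∪ (C_1 \ B_1)` in the lifted dependency graph. -/
def DMG.ESep (G : DMG V) (A B C : Set V) : Prop :=
  G.lift.sigmaSep (Sum.inl '' A) (Sum.inr '' B)
    ((Sum.inl '' C) ∪ ((Sum.inr '' C) \ (Sum.inr '' B)))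

/-- The independence model `I_E^G` of E-separation triples. -/
def DMG.IE (G : DMG V) : Set (Set V × Set V × Set V) :=
  {t | G.ESep t.1 t.2.1 t.2.2}


/-- The latent projection of `G` onto the observed nodes `O`: a directed edge when there is
a non-trivial directed walk whose interior nodes are all latent, and a bidirected edge when
there is a non-trivial collider-free walk with arrowheads at both endpoints whose interior
nodes are all latent. -/
def DMG.latentProj (G : DMG V) (O : Set V) : DMG O where
  Ed := {e | ∃ p : G.Walk e.1.val e.2.val,
          p.IsDirected ∧ 0 < p.length ∧ ∀ x ∈ p.interior, x ∉ O}
  Ebi := {e | ∃ u v : O, e = s(u, v) ∧ ∃ p : G.Walk u.val v.val,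
          p.headAtStart ∧ p.headAtEnd ∧ p.NoColliders ∧ 0 < p.length ∧
          ∀ x ∈ p.interior, x ∉ O}

/-- The last edge of the walk `p` before entering `scc_G(w)` has an arrowhead at its
endpoint in `scc_G(w)` (vacuous if the walk never leaves `scc_G(w)`). -/
def DMG.lastEdgeInto (G : DMG V) {a b : V} (w : V) (p : G.Walk a b) : Prop :=
  (∀ x ∈ p.support, x ∈ G.scc w) ∨
  ∃ (x y : V) (t : LinkType) (h : G.linkOK x y t) (p₁ : G.Walk a x) (p₂ : G.Walk y b),
    p = p₁.append (.cons t h p₂) ∧ x ∉ G.scc w ∧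
    (∀ z ∈ p₂.support, z ∈ G.scc w) ∧ t.headR

/-- An (asymmetric) inducing path from `v` to `w`: a non-trivial path such that every
collider on it is an ancestor of `v` or `w`, every interior non-collider is unblockable,
and the last edge before entering `scc_G(w)` points into `scc_G(w)`. -/
def DMG.IsInducingPath (G : DMG V) {v w : V} (p : G.Walk v w) : Prop :=
  0 < p.length ∧ p.IsPath ∧
  p.CollidersIn (G.anc {v, w}) ∧ p.NoncollidersUnblockable ∧ G.lastEdgeInto w p

/-!
If `v` is not an ancestor of `w`, an open walk from `v_0` to `w_1` in the lifted graph would have to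
enter the copy in `V_1` of `S = scc_G(w)` at some node `s`, coming from a node `x`. It cannot do so
along an edge `x → s`: then `x` is not the endpoint `v_0`, and it is a copy of a node of `pa_G(S)`;
as no edge leads from `V_1` back to `V_0` and `S` is convex for the ancestor preorder, it is a
blockable non-collider. To do so against an edge `s → x`, by convexity `x` must not be an ancestor
of `S`. But the walk reaches every such node of `V_1` through an arrowhead: this holds on entering
`V_1`, and it persists because turning back at such a node makes it a collider, which is not an
ancestor of `pa_G(S)` and hence blocks the walk.
-/

namespace DMG

variable {G : DMG V} {S : Set V}

theorem anc_pa_subset : G.anc (G.pa S) ⊆ G.anc S := by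
  rintro u ⟨p, ⟨s, hs, hps⟩, hup⟩
  exact ⟨s, hs, hup.tail hps⟩

theorem mem_anc_of_edge {u v : V} (huv : (u, v) ∈ G.Ed) (hv : v ∈ G.anc S) : u ∈ G.anc S := by
  obtain ⟨s, hs, hvs⟩ := hv
  exact ⟨s, hs, hvs.head huv⟩

theorem subset_anc : S ⊆ G.anc S := fun s hs => ⟨s, hs, .refl⟩

theorem scc_eq_of_ancestor {v w : V} (hvw : G.ancestor v w) (hwv : G.ancestor w v) :
    G.scc v = G.scc w := by
  ext x
  exact ⟨fun hx => ⟨hx.1.trans hvw, hwv.trans hx.2⟩, fun hx => ⟨hx.1.trans hwv, hvw.trans hx.2⟩⟩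

/-- `S` is convex for the ancestor preorder: it contains every node lying on a directed walk
between two of its nodes. Strongly connected components are the instances of interest. -/
def AncestrallyConvex (G : DMG V) (S : Set V) : Prop :=
  ∀ ⦃s x⦄, s ∈ S → G.ancestor s x → x ∈ G.anc S → x ∈ S

theorem ancestrallyConvex_scc (v : V) : G.AncestrallyConvex (G.scc v) := by
  rintro s x hs hsx ⟨t, ht, hxt⟩
  exact ⟨hxt.trans ht.1, hs.2.trans hsx⟩

/-- The node of `G` of which a node of the lifted graph is a copy. -/
def unlift : V ⊕ V → V := Sum.elim id id

theorem unlift_mem_Ed {x y : V ⊕ V} (h : (x, y) ∈ G.lift.Ed) : (unlift x, unlift y) ∈ G.Ed := by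
  obtain ⟨u, v, huv, h | h | h⟩ := h <;> cases h <;> exact huv

theorem unlift_mem_Ebi {x y : V ⊕ V} (h : s(x, y) ∈ G.lift.Ebi) :
    s(unlift x, unlift y) ∈ G.Ebi := by
  obtain ⟨u, v, huv, h⟩ := h
  suffices s(unlift x, unlift y) = s(u, v) from this ▸ huv
  rcases h with h | h | h | h <;> exact congrArg (Sym2.map unlift) h

theorem ancestor_unlift {x y : V ⊕ V} (h : G.lift.ancestor x y) :
    G.ancestor (unlift x) (unlift y) :=
  Relation.ReflTransGen.lift unlift (fun _ _ => unlift_mem_Ed) _ _ h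

theorem not_edge_inr_inl {u v : V} : (Sum.inr u, Sum.inl v) ∉ G.lift.Ed := by
  rintro ⟨_, _, _, h | h | h⟩ <;> cases h

theorem not_ancestor_inr_inl {u v : V} : ¬ G.lift.ancestor (Sum.inr u) (Sum.inl v) := by
  suffices ∀ y, G.lift.ancestor (Sum.inr u) y → y.isRight from fun h => by simpa using this _ h
  intro y h
  induction h with
  | refl => rfl
  | @tail x y _ hxy hx =>
    obtain ⟨d, rfl⟩ := Sum.isRight_iff.mp hx
    cases y with
    | inl => exact absurd hxy not_edge_inr_inl
    | inr => rfl

/-- The set `C_0 ∪ (C_1 \ B_1)` on which E-separation of `B` given `C` conditions. -/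
def liftedCond (B C : Set V) : Set (V ⊕ V) :=
  Sum.inl '' C ∪ (Sum.inr '' C \ Sum.inr '' B)

theorem unlift_mem_of_mem_liftedCond {B C : Set V} {x : V ⊕ V} (hx : x ∈ liftedCond B C) :
    unlift x ∈ C := by
  rcases hx with ⟨c, hc, rfl⟩ | ⟨⟨c, hc, rfl⟩, -⟩ <;> exact hc

theorem mem_liftedCond {B C : Set V} {x : V ⊕ V} (hx : unlift x ∈ C) (hxB : x ∉ Sum.inr '' B) :
    x ∈ liftedCond B C := by
  cases x with
  | inl c => exact .inl ⟨c, hx, rfl⟩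
  | inr c => exact .inr ⟨⟨c, hx, rfl⟩, hxB⟩

theorem unlift_mem_anc_of_mem_anc_liftedCond {B C : Set V} {x : V ⊕ V}
    (hx : x ∈ G.lift.anc (liftedCond B C)) : unlift x ∈ G.anc C := by
  obtain ⟨z, hz, hxz⟩ := hx
  exact ⟨unlift z, unlift_mem_of_mem_liftedCond hz, ancestor_unlift hxz⟩

theorem AncestrallyConvex.inr_notMem_scc (hS : G.AncestrallyConvex S) {x : V ⊕ V} {s : V}
    (hs : s ∈ S) (hxs : (x, Sum.inr s) ∈ G.lift.Ed) (hx : x ∉ Sum.inr '' S) :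
    Sum.inr s ∉ G.lift.scc x := by
  rintro ⟨hsx, -⟩
  cases x with
  | inl => exact not_ancestor_inr_inl hsx
  | inr b =>
    have hb : b ∈ S :=
      hS hs (ancestor_unlift hsx) (mem_anc_of_edge (unlift_mem_Ed hxs) (subset_anc hs))
    exact hx ⟨b, hb, rfl⟩

/-- The invariant of an open walk reaching a node of the lifted graph along a link of kind `t`:
a node of `V_1` is outside `S_1`, and if it is not an ancestor of `S` then the walk points into
it, so that turning back against an edge would create a collider there. -/
def ArrivesOutside (G : DMG V) (S : Set V) (t : LinkType) : V ⊕ V → Prop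
  | .inl _ => True
  | .inr d => d ∉ S ∧ (d ∉ G.anc S → t.headR)

namespace ArrivesOutside

variable {B : Set V} {t : LinkType} {u x y : V ⊕ V}

theorem notMem (hx : G.ArrivesOutside S t x) : x ∉ Sum.inr '' S := by
  rintro ⟨d, hd, rfl⟩
  exact hx.1 hd

theorem forward (hS : G.AncestrallyConvex S) (hBS : B ⊆ S) (hx : G.ArrivesOutside S t x)
    (hxy : (x, y) ∈ G.lift.Ed)
    (hopen : ¬ unblockableAt G.lift u x y t .fwd → x ∉ liftedCond B (G.pa S)) :
    G.ArrivesOutside S .fwd y := by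
  cases y with
  | inl => trivial
  | inr d =>
    refine ⟨fun hd => ?_, fun _ => trivial⟩
    have blockable : ¬ unblockableAt G.lift u x (Sum.inr d) t .fwd :=
      fun h => hS.inr_notMem_scc hd hxy hx.notMem (h.2 rfl)
    have mem_pa : unlift x ∈ G.pa S := ⟨d, hd, unlift_mem_Ed hxy⟩
    exact hopen blockable (mem_liftedCond mem_pa fun h => hx.notMem (Set.image_mono hBS h))

theorem backward (hS : G.AncestrallyConvex S) (hx : G.ArrivesOutside S t x)
    (hyx : (y, x) ∈ G.lift.Ed)
    (hopen : colliderAt t .bwd → x ∈ G.lift.anc (liftedCond B (G.pa S))) :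
    G.ArrivesOutside S .bwd y := by
  rcases y with _ | d
  · trivial
  rcases x with _ | b
  · exact absurd hyx not_edge_inr_inl
  have hdb : (d, b) ∈ G.Ed := unlift_mem_Ed hyx
  have b_mem_anc : b ∈ G.anc S := by
    by_contra hb
    have collider : colliderAt t .bwd := ⟨hx.2 hb, trivial⟩
    exact hb (anc_pa_subset (unlift_mem_anc_of_mem_anc_liftedCond (hopen collider)))
  exact ⟨fun hd => hx.1 (hS hd (.single hdb) b_mem_anc),
    fun hd => absurd (mem_anc_of_edge hdb b_mem_anc) hd⟩

theorem bidirected (hbi : ∀ s ∈ S, ∀ e ∈ G.Ebi, s ∉ e) (hxy : s(x, y) ∈ G.lift.Ebi) :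
    G.ArrivesOutside S .bi y := by
  cases y with
  | inl => trivial
  | inr d =>
    exact ⟨fun hd => hbi d hd _ (unlift_mem_Ebi hxy) (Sym2.mem_mk_right _ _), fun _ => trivial⟩

theorem of_linkOK_inl {a : V} (hbi : ∀ s ∈ S, ∀ e ∈ G.Ebi, s ∉ e) (ha : a ∉ G.anc S)
    (hay : G.lift.linkOK (Sum.inl a) y t) : G.ArrivesOutside S t y := by
  cases y with
  | inl => trivial
  | inr d =>
    cases t with
    | fwd =>
      exact ⟨fun hd => ha (mem_anc_of_edge (unlift_mem_Ed hay) (subset_anc hd)), fun _ => trivial⟩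
    | bwd => exact absurd hay not_edge_inr_inl
    | bi => exact bidirected hbi hay

theorem notMem_of_sigmaOpenAux (hS : G.AncestrallyConvex S)
    (hbi : ∀ s ∈ S, ∀ e ∈ G.Ebi, s ∉ e) (hBS : B ⊆ S) (p : G.lift.Walk x y)
    (hx : G.ArrivesOutside S t x) (hp : p.sigmaOpenAux (liftedCond B (G.pa S)) u t) :
    y ∉ Sum.inr '' S := by
  induction p generalizing u t with
  | nil => exact hx.notMem
  | cons t₂ hlink q ih =>
    obtain ⟨⟨collider_open, noncollider_open⟩, hq⟩ := hp
    refine ih ?_ hq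
    cases t₂ with
    | fwd => exact hx.forward hS hBS hlink (noncollider_open fun hcoll => hcoll.2)
    | bwd => exact hx.backward hS hlink collider_open
    | bi => exact bidirected hbi hlink

end ArrivesOutside

theorem AncestrallyConvex.eSep_pa (hS : G.AncestrallyConvex S)
    (hbi : ∀ s ∈ S, ∀ e ∈ G.Ebi, s ∉ e) {A B : Set V} (hA : Disjoint A (G.anc S))
    (hBS : B ⊆ S) : G.ESep A B (G.pa S) := by
  rintro _ ⟨a, ha, rfl⟩ _ ⟨b, hb, rfl⟩ p hp
  cases p with
  | cons t hlink q =>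
    have hstart := ArrivesOutside.of_linkOK_inl hbi (hA.notMem_of_mem_left ha) hlink
    exact hstart.notMem_of_sigmaOpenAux hS hbi hBS q hp ⟨b, hBS hb, rfl⟩

theorem eSep_pa_scc_of_not_ancestor {v w : V} (hbi : ∀ s ∈ G.scc w, ∀ e ∈ G.Ebi, s ∉ e)
    (hvw : ¬ G.ancestor v w) : G.ESep {v} {w} (G.pa (G.scc w)) := by
  have v_notMem : v ∉ G.anc (G.scc w) := fun ⟨_, hs, hvs⟩ => hvw (hvs.trans hs.1)
  have w_mem : w ∈ G.scc w := ⟨.refl, .refl⟩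
  exact (ancestrallyConvex_scc w).eSep_pa hbi (Set.disjoint_singleton_left.mpr v_notMem)
    (Set.singleton_subset_iff.mpr w_mem)

end DMG

theorem pairwise_separation_general (G : DMG V) (v w : V)
    (hbi : ∀ s ∈ G.scc v ∪ G.scc w, ∀ e ∈ G.Ebi, s ∉ e) (hscc : G.scc v ≠ G.scc w) :
    (({v} : Set V), ({w} : Set V), G.pa (G.scc w)) ∈ G.IE ∨
    (({w} : Set V), ({v} : Set V), G.pa (G.scc v)) ∈ G.IE := by
  by_cases hvw : G.ancestor v w
  · have hwv : ¬ G.ancestor w v := fun hwv => hscc (DMG.scc_eq_of_ancestor hvw hwv)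
    exact .inr (DMG.eSep_pa_scc_of_not_ancestor (fun s hs => hbi s (.inl hs)) hwv)
  · exact .inl (DMG.eSep_pa_scc_of_not_ancestor (fun s hs => hbi s (.inr hs)) hvw)

/-- Pairwise separation across distinct strongly connected components. -/
theorem pairwise_separation {V : Type} [Fintype V] (G : DMG V) (hG : G.Ebi = ∅)
    (v w : V) (hvw : v ≠ w) (hscc : G.scc v ≠ G.scc w) :
    (({v} : Set V), ({w} : Set V), G.pa (G.scc w)) ∈ G.IE ∨
    (({w} : Set V), ({v} : Set V), G.pa (G.scc v)) ∈ G.IE :=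
  pairwise_separation_general G v w (by simp [hG]) hscc

end ESepPaper
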